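/- arXiv:1508.07337 — 4 statements merged into one kernel-verified Lean document; each statement's English description precedes it below -/
import Mathlib

section
/- Let G be a directed graph. Then the affine zero locus Z̃(G) = {p : E(G) → ℂ | f(p) = 0 for all f ∈ Ĩ(G)} of the strong incidence ideal is a union of finitely many ℂ-linear subspaces of ℂ^{E(G)}, and the Krull dimension of the ring ℚ[E(G)]/Ĩ_ℚ(G) equals α̃(G). -/
open MvPolynomial

/-- The `l`-th elementary symmetric polynomial in the finite set `s` of variables
(`1` for `l = 0`, `0` for `l > |s|`). -/
noncomputable def esymmOf (R : Type) [CommRing R] {E : Type} (s : Finset E) (l : ℕ) :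
    MvPolynomial E R :=
  ∑ t ∈ s.powersetCard l, ∏ x ∈ t, X x

/-- The strong incidence ideal: generated, for each vertex `v`, by
`e_1(out) - e_1(in)` together with `e_l(out)` and `e_l(in)` for all `l ≥ 2`
(these vanish for `l` larger than the out-degree resp. in-degree). -/
noncomputable def strongIncidenceIdeal (R : Type) [CommRing R] {V E : Type}
    [Fintype E] [DecidableEq V] (src tgt : E → V) : Ideal (MvPolynomial E R) :=
  Ideal.span ({f | ∃ v : V,
      f = esymmOf R (Finset.univ.filter fun x => src x = v) 1
        - esymmOf R (Finset.univ.filter fun x => tgt x = v) 1} ∪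
    {f | ∃ (v : V) (l : ℕ), 2 ≤ l ∧
      (f = esymmOf R (Finset.univ.filter fun x => src x = v) l ∨
       f = esymmOf R (Finset.univ.filter fun x => tgt x = v) l)})

/-- The affine zero locus in `ℂ^E` of an ideal of `ℤ[E]`. -/
def zeroLocus {E : Type} (I : Ideal (MvPolynomial E ℤ)) : Set (E → ℂ) :=
  {p | ∀ f ∈ I, MvPolynomial.aeval p f = 0}

/-- A directed cycle in the directed graph with edge-endpoint maps `src`, `tgt`:
pairwise distinct vertices `v_0, …, v_n` and edges `x_0, …, x_n` with `x_i` going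
from `v_i` to `v_{i+1}` (indices mod `n+1`). -/
structure DirCycle {V E : Type} (src tgt : E → V) where
  n : ℕ
  vtx : ZMod (n + 1) → V
  edge : ZMod (n + 1) → E
  vtx_inj : Function.Injective vtx
  edge_src : ∀ i, src (edge i) = vtx i
  edge_tgt : ∀ i, tgt (edge i) = vtx (i + 1)

/-- `C` is the set of edges of a directed cycle.  (A directed cycle, considered up to
cyclic permutation, is uniquely determined by its set of edges.) -/
def IsCycle {V E : Type} (src tgt : E → V) (C : Set E) : Prop :=
  ∃ c : DirCycle src tgt, C = Set.range c.edge

/-- `α̃(G)`: the maximal number of pairwise (vertex-)disjoint directed cycles.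
(The vertex set of the directed cycle with edge set `C` is `src '' C`.) -/
noncomputable def strongCyclePacking {V E : Type} (src tgt : E → V) : ℕ :=
  sSup {k | ∃ f : Fin k → Set E, (∀ i, IsCycle src tgt (f i)) ∧
    ∀ i j, i ≠ j → Disjoint (src '' f i) (src '' f j)}

/-- The equations characterising points of the zero locus. -/
def Sol {V E R : Type} [Fintype E] [DecidableEq V] [CommRing R] (src tgt : E → V)
    (p : E → R) : Prop :=
  (∀ v, ∑ x with src x = v, p x = ∑ x with tgt x = v, p x) ∧
  (∀ x y, x ≠ y → src x = src y → p x * p y = 0) ∧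
  (∀ x y, x ≠ y → tgt x = tgt y → p x * p y = 0)

lemma aeval_esymmOf {k R E : Type} [CommRing k] [CommRing R] [Algebra k R] (p : E → R)
    (s : Finset E) (l : ℕ) :
    aeval p (esymmOf k s l) = ∑ t ∈ s.powersetCard l, ∏ x ∈ t, p x := by
  simp [esymmOf]

lemma aeval_esymmOf_one {k R E : Type} [CommRing k] [CommRing R] [Algebra k R] (p : E → R)
    (s : Finset E) : aeval p (esymmOf k s 1) = ∑ x ∈ s, p x := by
  simp [aeval_esymmOf, Finset.powersetCard_one]

lemma esymm_zero_of {R E : Type} [DecidableEq E] [CommRing R] (p : E → R) (s : Finset E)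
    (h : ∀ x ∈ s, ∀ y ∈ s, x ≠ y → p x * p y = 0) (l : ℕ) (hl : 2 ≤ l) :
    ∑ t ∈ s.powersetCard l, ∏ x ∈ t, p x = 0 := by
  apply Finset.sum_eq_zero
  intro t ht
  rw [Finset.mem_powersetCard] at ht
  obtain ⟨x, hx, y, hy, hxy⟩ := Finset.one_lt_card.mp (by omega : 1 < t.card)
  have h2 : ({x, y} : Finset E) ⊆ t := by
    intro z hz
    simp only [Finset.mem_insert, Finset.mem_singleton] at hz
    rcases hz with rfl | rfl <;> assumption
  rw [← Finset.prod_sdiff h2, Finset.prod_pair hxy, h x (ht.1 hx) y (ht.1 hy) hxy, mul_zero]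

lemma zero_of_esymm {R E : Type} [DecidableEq E] [CommRing R] [IsDomain R] (p : E → R)
    (s : Finset E)
    (h : ∀ l, 2 ≤ l → ∑ t ∈ s.powersetCard l, ∏ x ∈ t, p x = 0) :
    ∀ x ∈ s, ∀ y ∈ s, x ≠ y → p x * p y = 0 := by
  classical
  intro x hx y hy hxy
  by_contra hne
  have hpx : p x ≠ 0 := left_ne_zero_of_mul hne
  have hpy : p y ≠ 0 := right_ne_zero_of_mul hne
  set t := s.filter (fun z => p z ≠ 0) with ht
  have hc : 2 ≤ t.card := Finset.one_lt_card.mpr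
    ⟨x, by simp [ht, hx, hpx], y, by simp [ht, hy, hpy], hxy⟩
  have h1 := h _ hc
  rw [Finset.sum_eq_single t] at h1
  · rw [Finset.prod_eq_zero_iff] at h1
    obtain ⟨z, hz, hz0⟩ := h1
    exact (Finset.mem_filter.mp hz).2 hz0
  · intro u hu hut
    rw [Finset.mem_powersetCard] at hu
    by_contra hu0
    apply hut
    apply Finset.eq_of_subset_of_card_le _ hu.2.ge
    intro z hz
    rw [ht, Finset.mem_filter]
    exact ⟨hu.1 hz, fun h0 => hu0 (Finset.prod_eq_zero hz h0)⟩
  · intro hn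
    exact absurd (Finset.mem_powersetCard.mpr ⟨Finset.filter_subset _ _, rfl⟩) hn

lemma Sol.aeval_eq_zero {V E k R : Type} [Fintype E] [DecidableEq V] [DecidableEq E]
    [CommRing k] [CommRing R] [Algebra k R] {src tgt : E → V} {p : E → R}
    (h : Sol src tgt p) (f : MvPolynomial E k) (hf : f ∈ strongIncidenceIdeal k src tgt) :
    aeval p f = 0 := by
  have : strongIncidenceIdeal k src tgt ≤ RingHom.ker (aeval p : MvPolynomial E k →ₐ[k] R) := by
    unfold strongIncidenceIdeal
    rw [Ideal.span_le]
    rintro f (⟨v, rfl⟩ | ⟨v, l, hl, rfl | rfl⟩)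
    · simp only [SetLike.mem_coe, RingHom.mem_ker, map_sub, aeval_esymmOf_one]
      rw [h.1 v, sub_self]
    · simp only [SetLike.mem_coe, RingHom.mem_ker, aeval_esymmOf]
      apply esymm_zero_of _ _ _ l hl
      intro x hx y hy hxy
      simp only [Finset.mem_filter, Finset.mem_univ, true_and] at hx hy
      exact h.2.1 x y hxy (hx.trans hy.symm)
    · simp only [SetLike.mem_coe, RingHom.mem_ker, aeval_esymmOf]
      apply esymm_zero_of _ _ _ l hl
      intro x hx y hy hxy
      simp only [Finset.mem_filter, Finset.mem_univ, true_and] at hx hy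
      exact h.2.2 x y hxy (hx.trans hy.symm)
  exact this hf

lemma Sol.of_aeval {V E k R : Type} [Fintype E] [DecidableEq V] [DecidableEq E]
    [CommRing k] [CommRing R] [IsDomain R] [Algebra k R] {src tgt : E → V} {p : E → R}
    (h : ∀ f ∈ strongIncidenceIdeal k src tgt, aeval p f = 0) : Sol src tgt p := by
  refine ⟨fun v => ?_, fun x y hxy hs => ?_, fun x y hxy hs => ?_⟩
  · have := h _ (Ideal.subset_span (Or.inl ⟨v, rfl⟩))
    rw [map_sub, aeval_esymmOf_one, aeval_esymmOf_one, sub_eq_zero] at this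
    exact this
  · refine zero_of_esymm p (Finset.univ.filter fun x => src x = src y) (fun l hl => ?_) x
      (by simp [hs]) y (by simp) hxy
    rw [← aeval_esymmOf (k := k)]
    exact h _ (Ideal.subset_span (Or.inr ⟨_, l, hl, Or.inl rfl⟩))
  · refine zero_of_esymm p (Finset.univ.filter fun x => tgt x = tgt y) (fun l hl => ?_) x
      (by simp [hs]) y (by simp) hxy
    rw [← aeval_esymmOf (k := k)]
    exact h _ (Ideal.subset_span (Or.inr ⟨_, l, hl, Or.inr rfl⟩))

/-- The linear subspace attached to a set of edges. -/
def linPart {V E : Type} [Fintype E] [DecidableEq V] (src tgt : E → V) (S : Set E) :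
    Submodule ℂ (E → ℂ) where
  carrier := {p | (∀ x, x ∉ S → p x = 0) ∧
    ∀ v, ∑ x with src x = v, p x = ∑ x with tgt x = v, p x}
  add_mem' := by
    rintro p q ⟨hp, hp'⟩ ⟨hq, hq'⟩
    refine ⟨fun x hx => by simp [hp x hx, hq x hx], fun v => ?_⟩
    simp only [Pi.add_apply, Finset.sum_add_distrib, hp' v, hq' v]
  zero_mem' := by simp
  smul_mem' := by
    rintro c p ⟨hp, hp'⟩
    refine ⟨fun x hx => by simp [hp x hx], fun v => ?_⟩
    simp only [Pi.smul_apply, ← Finset.smul_sum, hp' v]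

lemma part_one {V E : Type} [Fintype V] [Fintype E] [DecidableEq V] [DecidableEq E]
    (src tgt : E → V) :
    ∃ (r : ℕ) (L : Fin r → Submodule ℂ (E → ℂ)),
        zeroLocus (strongIncidenceIdeal ℤ src tgt) = ⋃ i, (L i : Set (E → ℂ)) := by
  classical
  let ι := {S : Set E // Set.InjOn src S ∧ Set.InjOn tgt S}
  obtain ⟨r, ⟨e⟩⟩ := Finite.exists_equiv_fin ι
  refine ⟨r, fun i => linPart src tgt (e.symm i).1, ?_⟩
  ext p
  simp only [Set.mem_iUnion]
  constructor
  · intro hp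
    have hs : Sol src tgt p := Sol.of_aeval (k := ℤ) hp
    refine ⟨e ⟨{x | p x ≠ 0}, fun x hx y hy hxy => ?_, fun x hx y hy hxy => ?_⟩, ?_⟩
    · by_contra hne
      exact mul_ne_zero hx hy (hs.2.1 x y hne hxy)
    · by_contra hne
      exact mul_ne_zero hx hy (hs.2.2 x y hne hxy)
    · rw [Equiv.symm_apply_apply]
      exact ⟨fun x hx => by simpa using hx, hs.1⟩
  · rintro ⟨i, hi, hi'⟩
    have hs : Sol src tgt p := by
      refine ⟨hi', fun x y hne hxy => ?_, fun x y hne hxy => ?_⟩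
      · by_contra h0
        refine hne ((e.symm i).2.1 ?_ ?_ hxy)
        · by_contra hx; exact h0 (by rw [hi x hx, zero_mul])
        · by_contra hx; exact h0 (by rw [hi y hx, mul_zero])
      · by_contra h0
        refine hne ((e.symm i).2.2 ?_ ?_ hxy)
        · by_contra hx; exact h0 (by rw [hi x hx, zero_mul])
        · by_contra hx; exact h0 (by rw [hi y hx, mul_zero])
    exact fun f hf => hs.aeval_eq_zero f hf

/-- The set of sizes of packings. -/
def packSet {V E : Type} (src tgt : E → V) : Set ℕ :=
  {k | ∃ f : Fin k → Set E, (∀ i, IsCycle src tgt (f i)) ∧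
    ∀ i j, i ≠ j → Disjoint (src '' f i) (src '' f j)}

lemma packSet_bdd {V E : Type} [Fintype V] (src tgt : E → V) : BddAbove (packSet src tgt) := by
  refine ⟨Fintype.card V, ?_⟩
  rintro k ⟨f, hf, hd⟩
  choose c hc using hf
  have hm : ∀ i, src ((c i).edge 0) ∈ src '' f i := fun i =>
    ⟨_, by rw [hc i]; exact ⟨0, rfl⟩, rfl⟩
  have := Fintype.card_le_of_injective (fun i : Fin k => src ((c i).edge 0)) (by
    intro i j hij
    by_contra hne
    refine Set.disjoint_left.mp (hd i j hne) (hm i) ?_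
    simp only at hij
    rw [hij]
    exact hm j)
  simpa using this

lemma lower {V E : Type} [Fintype V] [Fintype E] [DecidableEq V] [DecidableEq E]
    (src tgt : E → V) (k : ℕ) (hk : k ∈ packSet src tgt) :
    (k : WithBot ℕ∞) ≤
      ringKrullDim (MvPolynomial E ℚ ⧸ strongIncidenceIdeal ℚ src tgt) := by
  classical
  obtain ⟨f, hf, hd⟩ := hk
  choose c hc using hf
  have key : ∀ i j i' j', (c i).vtx j = (c i').vtx j' →
      (c i).edge j = (c i').edge j' ∧ i = i' := by
    intro i j i' j' h
    have hii : i = i' := by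
      by_contra hne
      refine Set.disjoint_left.mp (hd i i' hne) (?_ : (c i).vtx j ∈ _) ?_
      · exact ⟨(c i).edge j, by rw [hc i]; exact ⟨j, rfl⟩, (c i).edge_src j⟩
      · rw [h]
        exact ⟨(c i').edge j', by rw [hc i']; exact ⟨j', rfl⟩, (c i').edge_src j'⟩
    subst hii
    exact ⟨by rw [(c i).vtx_inj h], rfl⟩
  let p : E → MvPolynomial (Fin k) ℚ := fun x =>
    ∑ i, ∑ j : ZMod ((c i).n + 1), if (c i).edge j = x then X i else 0
  have hp : ∀ x, p x ≠ 0 → ∃ i j, (c i).edge j = x := by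
    intro x hx
    by_contra! hcon
    exact hx (Finset.sum_eq_zero fun i _ => Finset.sum_eq_zero fun j _ => if_neg (hcon i j))
  have hsum : ∀ (g : E → V) (v : V), ∑ x with g x = v, p x =
      ∑ i, ∑ j : ZMod ((c i).n + 1), if g ((c i).edge j) = v then X i else 0 := by
    intro g v
    rw [Finset.sum_comm]
    refine Finset.sum_congr rfl fun i _ => ?_
    rw [Finset.sum_comm]
    refine Finset.sum_congr rfl fun j _ => ?_
    rw [Finset.sum_ite_eq]
    simp
  have hs : Sol src tgt p := by
    refine ⟨fun v => ?_, fun x y hne hxy => ?_, fun x y hne hxy => ?_⟩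
    · rw [hsum, hsum]
      refine Finset.sum_congr rfl fun i _ => ?_
      simp only [(c i).edge_src, (c i).edge_tgt]
      exact (Equiv.sum_comp (Equiv.addRight (1 : ZMod ((c i).n + 1)))
        (fun j => if (c i).vtx j = v then (X i : MvPolynomial (Fin k) ℚ) else 0)).symm
    · by_contra h0
      obtain ⟨i, j, rfl⟩ := hp x (left_ne_zero_of_mul h0)
      obtain ⟨i', j', rfl⟩ := hp y (right_ne_zero_of_mul h0)
      rw [(c i).edge_src, (c i').edge_src] at hxy
      exact hne (key _ _ _ _ hxy).1
    · by_contra h0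
      obtain ⟨i, j, rfl⟩ := hp x (left_ne_zero_of_mul h0)
      obtain ⟨i', j', rfl⟩ := hp y (right_ne_zero_of_mul h0)
      rw [(c i).edge_tgt, (c i').edge_tgt] at hxy
      have hii := (key _ _ _ _ hxy).2
      subst hii
      have := add_right_cancel ((c i).vtx_inj hxy)
      exact hne (by rw [this])
  have hX : ∀ i, p ((c i).edge 0) = X i := by
    intro i
    have hinj : ∀ i' j', (c i').edge j' = (c i).edge 0 → (c i').vtx j' = (c i).vtx 0 := by
      intro i' j' h
      rw [← (c i').edge_src, h, (c i).edge_src]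
    change ∑ i', ∑ j' : ZMod ((c i').n + 1),
      (if (c i').edge j' = (c i).edge 0 then (X i' : MvPolynomial (Fin k) ℚ) else 0) = X i
    rw [Finset.sum_eq_single i, Finset.sum_eq_single 0]
    · simp
    · intro j _ hj
      rw [if_neg]
      exact fun h => hj ((c i).vtx_inj (hinj _ _ h))
    · simp
    · intro i' _ hi'
      refine Finset.sum_eq_zero fun j' _ => if_neg fun h => hi' ?_
      exact (key _ _ _ _ (hinj _ _ h)).2
    · simp
  let φ : (MvPolynomial E ℚ ⧸ strongIncidenceIdeal ℚ src tgt) →+* MvPolynomial (Fin k) ℚ :=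
    Ideal.Quotient.lift _ (aeval p : MvPolynomial E ℚ →ₐ[ℚ] _).toRingHom
      (fun f hf => hs.aeval_eq_zero f hf)
  have hφ : Function.Surjective φ := by
    apply Ideal.Quotient.lift_surjective_of_surjective
    change Function.Surjective (aeval p : MvPolynomial E ℚ →ₐ[ℚ] _)
    intro q
    refine ⟨aeval (fun i => X ((c i).edge 0)) q, ?_⟩
    rw [← AlgHom.comp_apply]
    have : (aeval p : MvPolynomial E ℚ →ₐ[ℚ] MvPolynomial (Fin k) ℚ).comp
        (aeval (fun i => X ((c i).edge 0))) = AlgHom.id ℚ _ := by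
      ext i : 1
      simp [hX]
    rw [this]
    rfl
  have := ringKrullDim_le_of_surjective φ hφ
  rw [MvPolynomial.ringKrullDim_of_isNoetherianRing, ringKrullDim_eq_zero_of_field] at this
  simpa using this

lemma upper_domain {V E D : Type} [Fintype V] [Fintype E] [DecidableEq V] [DecidableEq E]
    (src tgt : E → V) [CommRing D] [IsDomain D] [Algebra ℚ D] (p : E → D)
    (hs : Sol src tgt p)
    (hsurj : Function.Surjective (aeval p : MvPolynomial E ℚ →ₐ[ℚ] D)) :
    ∃ k ∈ packSet src tgt, ringKrullDim D ≤ (k : WithBot ℕ∞) := by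
  classical
  let S := {x : E // p x ≠ 0}
  have hsrc : ∀ x y : S, src x.1 = src y.1 → x = y := by
    intro x y h
    by_contra hne
    exact mul_ne_zero x.2 y.2 (hs.2.1 _ _ (fun h => hne (Subtype.ext h)) h)
  have htgt : ∀ x y : S, tgt x.1 = tgt y.1 → x = y := by
    intro x y h
    by_contra hne
    exact mul_ne_zero x.2 y.2 (hs.2.2 _ _ (fun h => hne (Subtype.ext h)) h)
  have hnext : ∀ x : S, ∃ y : S, src y.1 = tgt x.1 ∧ p y.1 = p x.1 := by
    intro x
    have h1 : ∑ z with tgt z = tgt x.1, p z = p x.1 := by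
      apply Finset.sum_eq_single_of_mem
      · simp
      · intro z hz hne
        by_contra h0
        simp only [Finset.mem_filter, Finset.mem_univ, true_and] at hz
        exact hne (congrArg Subtype.val (htgt ⟨z, h0⟩ x hz))
    have h2 := (hs.1 (tgt x.1)).trans h1
    obtain ⟨y, hy, hy0⟩ := Finset.exists_ne_zero_of_sum_ne_zero (h2.trans_ne x.2)
    simp only [Finset.mem_filter, Finset.mem_univ, true_and] at hy
    refine ⟨⟨y, hy0⟩, hy, ?_⟩
    rw [← h2]
    symm
    apply Finset.sum_eq_single_of_mem
    · simp [hy]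
    · intro z hz hne
      by_contra h0
      simp only [Finset.mem_filter, Finset.mem_univ, true_and] at hz
      exact hne (congrArg Subtype.val (hsrc ⟨z, h0⟩ ⟨y, hy0⟩ (hz.trans hy.symm)))
  choose nx hnx hpx using hnext
  have hinj : Function.Injective nx := by
    intro x y h
    apply htgt
    rw [← hnx, ← hnx, h]
  let σ : Equiv.Perm S := Equiv.ofBijective nx (Finite.injective_iff_bijective.mp hinj)
  have hσ : ∀ x, σ x = nx x := fun x => rfl
  have hpow : ∀ (n : ℕ) (x : S), p ((σ ^ n) x).1 = p x.1 := by
    intro n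
    induction n with
    | zero => intro x; rfl
    | succ n ih => intro x; rw [pow_succ', Equiv.Perm.mul_apply, hσ, hpx, ih]
  let Q := Quotient (Equiv.Perm.SameCycle.setoid σ)
  have hpQ : ∀ x y : S, σ.SameCycle x y → p x.1 = p y.1 := by
    intro x y h
    obtain ⟨n, hn⟩ := h.exists_nat_pow_eq
    rw [← hn, hpow]
  let g : Q → D := Quotient.lift (fun x : S => p x.1) hpQ
  refine ⟨Fintype.card Q, ?_, ?_⟩
  · let e : Q ≃ Fin (Fintype.card Q) := Fintype.equivFin Q
    let cyc : S → DirCycle src tgt := fun x =>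
      have hpos : Function.minimalPeriod σ x - 1 + 1 = Function.minimalPeriod σ x :=
        Nat.sub_add_cancel (Function.minimalPeriod_pos_of_mem_periodicPts
          (σ.injective.mem_periodicPts x))
      { n := Function.minimalPeriod σ x - 1
        vtx := fun i => src (σ^[i.val] x).1
        edge := fun i => (σ^[i.val] x).1
        vtx_inj := by
          intro i j hij
          have h := hsrc _ _ hij
          apply ZMod.val_injective
          refine Function.iterate_injOn_Iio_minimalPeriod ?_ ?_ h
          · exact (ZMod.val_lt i).trans_eq hpos
          · exact (ZMod.val_lt j).trans_eq hpos
        edge_src := fun i => rfl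
        edge_tgt := by
          intro i
          rw [← hnx, ← hσ, ← Function.iterate_succ_apply' σ]
          rw [ZMod.val_add, ZMod.val_one_eq_one_mod, Nat.add_mod_mod]
          generalize i.val = m
          rw [hpos, Function.iterate_mod_minimalPeriod_eq] }
    refine ⟨fun i => Set.range (cyc (e.symm i).out).edge, fun i => ⟨_, rfl⟩, ?_⟩
    intro i j hij
    rw [Set.disjoint_left]
    rintro _ ⟨_, ⟨a, rfl⟩, rfl⟩ ⟨_, ⟨b, rfl⟩, hb⟩
    apply hij
    apply e.symm.injective
    rw [← Quotient.out_eq (e.symm i), ← Quotient.out_eq (e.symm j)]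
    apply Quotient.sound
    have h : σ^[b.val] (e.symm j).out = σ^[a.val] (e.symm i).out := hsrc _ _ hb
    rw [Equiv.Perm.iterate_eq_pow, Equiv.Perm.iterate_eq_pow] at h
    change σ.SameCycle _ _
    rw [← Equiv.Perm.sameCycle_pow_left (n := a.val), ← h, Equiv.Perm.sameCycle_pow_left]
  · have hg : Function.Surjective (aeval g : MvPolynomial Q ℚ →ₐ[ℚ] D) := by
      intro d
      obtain ⟨q, rfl⟩ := hsurj d
      refine ⟨aeval (fun x => if h : p x ≠ 0 then X (Quotient.mk _ ⟨x, h⟩) else 0) q, ?_⟩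
      rw [← AlgHom.comp_apply]
      congr 1
      ext x : 1
      by_cases h : p x = 0
      · simp [h]
      · simp [h, g]
    have := ringKrullDim_le_of_surjective (aeval g : MvPolynomial Q ℚ →ₐ[ℚ] D).toRingHom hg
    rw [MvPolynomial.ringKrullDim_of_isNoetherianRing, ringKrullDim_eq_zero_of_field] at this
    simpa using this

lemma ringKrullDim_le_of_quot {A : Type} [CommRing A] (n : WithBot ℕ∞)
    (h : ∀ P : Ideal A, P.IsPrime → ringKrullDim (A ⧸ P) ≤ n) : ringKrullDim A ≤ n := by
  rw [ringKrullDim, Order.krullDim_eq_iSup_coheight]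
  refine iSup_le fun x => ?_
  have h1 := h x.asIdeal x.2
  rw [ringKrullDim_quotient] at h1
  rw [Order.coheight_eq_krullDim_Ici]
  have : Set.Ici x = PrimeSpectrum.zeroLocus (x.asIdeal : Set A) := by
    ext y
    rfl
  rw [this]
  exact h1

lemma upper {V E : Type} [Fintype V] [Fintype E] [DecidableEq V] [DecidableEq E]
    (src tgt : E → V) :
    ringKrullDim (MvPolynomial E ℚ ⧸ strongIncidenceIdeal ℚ src tgt) ≤
      (strongCyclePacking src tgt : WithBot ℕ∞) := by
  apply ringKrullDim_le_of_quot
  intro P hP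
  let π : MvPolynomial E ℚ →ₐ[ℚ] ((MvPolynomial E ℚ ⧸ strongIncidenceIdeal ℚ src tgt) ⧸ P) :=
    (Ideal.Quotient.mkₐ ℚ P).comp (Ideal.Quotient.mkₐ ℚ (strongIncidenceIdeal ℚ src tgt))
  have hπ : aeval (fun x => π (X x)) = π := by
    ext x : 1
    simp
  obtain ⟨k, hk, hle⟩ := upper_domain src tgt (fun x => π (X x)) (by
    apply Sol.of_aeval (k := ℚ)
    intro f hf
    rw [hπ]
    change Ideal.Quotient.mk P (Ideal.Quotient.mk _ f) = 0
    rw [Ideal.Quotient.eq_zero_iff_mem.mpr hf, map_zero]) (by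
    rw [hπ]
    exact (Ideal.Quotient.mk_surjective).comp Ideal.Quotient.mk_surjective)
  refine hle.trans ?_
  have : k ≤ strongCyclePacking src tgt := le_csSup (packSet_bdd src tgt) hk
  exact_mod_cast this

theorem stmt4 {V E : Type} [Fintype V] [Fintype E] [DecidableEq V] [DecidableEq E]
    (src tgt : E → V) :
    (∃ (r : ℕ) (L : Fin r → Submodule ℂ (E → ℂ)),
        zeroLocus (strongIncidenceIdeal ℤ src tgt) = ⋃ i, (L i : Set (E → ℂ))) ∧
      ringKrullDim (MvPolynomial E ℚ ⧸ strongIncidenceIdeal ℚ src tgt) =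
        (strongCyclePacking src tgt : WithBot (WithTop ℕ)) := by
  refine ⟨part_one src tgt, ?_⟩
  change _ = ((strongCyclePacking src tgt : ℕ) : WithBot ℕ∞)
  refine (le_antisymm (upper src tgt) (lower src tgt _ ?_))
  refine Nat.sSup_mem (s := packSet src tgt) ⟨0, fun i => i.elim0, fun i => i.elim0,
    fun i => i.elim0⟩ (packSet_bdd src tgt)
end

section
/- Let G be a directed graph. The following are equivalent: (1) G is acyclic; (2) the quotient ring ℤ[E(G)]/I(G) is finitely generated as a ℤ-module (as an abelian group); (3) there is an integer n ≥ 1 such that x^n ∈ I(G) for every edge variable x ∈ E(G); (4) the Krull dimension of ℤ[E(G)]/I(G) equals 1; (5) the Krull dimension of ℚ[E(G)]/I_ℚ(G) equals 0. -/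
open MvPolynomial

/-- The incidence ideal of the directed graph with edge-endpoint maps `src`, `tgt`:
the ideal generated by the incidence relations
`δ_{v,l} = e_l(edges out of v) - e_l(edges into v)` for all vertices `v` and all `l ≥ 1`
(for `l > k_v` the relation `δ_{v,l}` is the zero polynomial, so this ideal is generated by
the `δ_{v,l}` with `1 ≤ l ≤ k_v`). -/
noncomputable def incidenceIdeal (R : Type) [CommRing R] {V E : Type}
    [Fintype E] [DecidableEq V] (src tgt : E → V) : Ideal (MvPolynomial E R) :=
  Ideal.span {f | ∃ (v : V) (l : ℕ), 1 ≤ l ∧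
    f = esymmOf R (Finset.univ.filter fun x => src x = v) l
      - esymmOf R (Finset.univ.filter fun x => tgt x = v) l}

theorem aux_prod_eq {R K : Type} [CommRing R] [CommRing K] {V E : Type} [Fintype E] [DecidableEq V]
    (src tgt : E → V) (φ : MvPolynomial E R →+* K)
    (hφ : ∀ f ∈ incidenceIdeal R src tgt, φ f = 0) (v : V) (t : K) :
    ∏ x ∈ Finset.univ.filter (fun x => src x = v), (1 + t * φ (X x)) =
      ∏ x ∈ Finset.univ.filter (fun x => tgt x = v), (1 + t * φ (X x)) := by
  classical
  have key : ∀ s : Finset E, ∏ x ∈ s, (1 + t * φ (X x)) =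
      ∑ l ∈ Finset.range (Fintype.card E + 1), t ^ l * φ (esymmOf R s l) := by
    intro s
    rw [Finset.prod_one_add, Finset.sum_powerset]
    rw [← Finset.sum_subset (Finset.range_mono (Nat.succ_le_succ (Finset.card_le_univ s)))]
    · refine Finset.sum_congr rfl fun l _ => ?_
      rw [esymmOf, map_sum, Finset.mul_sum]
      refine Finset.sum_congr rfl fun u hu => ?_
      rw [Finset.prod_mul_distrib, Finset.prod_const, (Finset.mem_powersetCard.1 hu).2, map_prod]
    · intro l _ hl
      rw [esymmOf, Finset.powersetCard_eq_empty.2]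
      · simp
      · simp at hl; omega
  rw [key, key]
  refine Finset.sum_congr rfl fun l _ => ?_
  congr 1
  rcases Nat.eq_zero_or_pos l with rfl | hl
  · simp [esymmOf]
  · have := hφ _ (Ideal.subset_span ⟨v, l, hl, rfl⟩)
    rwa [map_sub, sub_eq_zero] at this

theorem aux_step {R K : Type} [CommRing R] [Field K] {V E : Type} [Fintype E] [DecidableEq V]
    (src tgt : E → V) (φ : MvPolynomial E R →+* K)
    (hφ : ∀ f ∈ incidenceIdeal R src tgt, φ f = 0) (x : E) (hx : φ (X x) ≠ 0) :
    ∃ y, src y = tgt x ∧ φ (X y) ≠ 0 := by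
  have h := aux_prod_eq src tgt φ hφ (tgt x) (-(φ (X x))⁻¹)
  rw [Finset.prod_eq_zero (i := x) (s := Finset.univ.filter fun y => tgt y = tgt x) (by simp)
    (by field_simp; simp)] at h
  obtain ⟨y, hy, h0⟩ := Finset.prod_eq_zero_iff.1 h
  refine ⟨y, by simpa using hy, fun h1 => ?_⟩
  simp [h1] at h0

theorem aux_cycle {V E : Type} [Fintype V] (src tgt : E → V) (P : E → Prop) (x : E) (hx : P x)
    (h : ∀ x, P x → ∃ y, src y = tgt x ∧ P y) : ∃ C : Set E, IsCycle src tgt C := by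
  classical
  let W := {v : V // ∃ x, P x ∧ src x = v}
  choose c hc hs using fun w : W => w.2
  let f : W → W := fun w => ⟨tgt (c w), by
    obtain ⟨y, hy, hp⟩ := h _ (hc w)
    exact ⟨y, hp, hy⟩⟩
  have hf : ∀ w, (f w).1 = tgt (c w) := fun _ => rfl
  let w0 : W := ⟨src x, x, hx, rfl⟩
  obtain ⟨m, n, hmn, he⟩ := Finite.exists_ne_map_eq_of_infinite (fun n : ℕ => f^[n] w0)
  have : ∃ w : W, w ∈ Function.periodicPts f := by
    wlog hlt : m < n generalizing m n
    · exact this n m hmn.symm he.symm (by omega)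
    refine ⟨f^[m] w0, Function.mk_mem_periodicPts (n := n - m) (by omega) ?_⟩
    change f^[m] w0 = f^[n] w0 at he
    rw [Function.IsPeriodicPt, Function.IsFixedPt, ← Function.iterate_add_apply, he]
    congr 2; omega
  obtain ⟨w, hw⟩ := this
  have hp := Function.minimalPeriod_pos_of_mem_periodicPts hw
  obtain ⟨k, hk⟩ := Nat.exists_eq_succ_of_ne_zero hp.ne'
  refine ⟨_, ⟨k, fun i => (f^[i.val] w).1, fun i => c (f^[i.val] w),
    ?_, ?_, ?_⟩, rfl⟩
  · intro i j hij
    have := Function.iterate_injOn_Iio_minimalPeriod (f := f) (x := w)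
      (x₁ := i.val) (x₂ := j.val)
      (by rw [Set.mem_Iio, hk]; exact ZMod.val_lt i)
      (by rw [Set.mem_Iio, hk]; exact ZMod.val_lt j) (Subtype.ext hij)
    exact ZMod.val_injective _ this
  · intro i
    exact hs _
  · intro i
    rw [← hf, ← Function.iterate_succ_apply' f]
    congr 1
    have : (i + 1).val = (i.val + 1) % Function.minimalPeriod f w := by
      rw [hk, ZMod.val_add, ZMod.val_one_eq_one_mod]
      simp
    change _ = f^[(i + 1).val] w
    rw [this, Function.iterate_mod_minimalPeriod_eq]

theorem aux_nilp (R : Type) [CommRing R] {V E : Type} [Fintype V] [Fintype E] [DecidableEq V]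
    (src tgt : E → V) (h : ¬ ∃ C : Set E, IsCycle src tgt C) (x : E) :
    ∃ n : ℕ, (X x : MvPolynomial E R) ^ n ∈ incidenceIdeal R src tgt := by
  change X x ∈ (incidenceIdeal R src tgt).radical
  rw [Ideal.radical_eq_sInf, Ideal.mem_sInf]
  rintro J ⟨hJ, hp⟩
  by_contra hx
  let K := FractionRing (MvPolynomial E R ⧸ J)
  let φ : MvPolynomial E R →+* K := (algebraMap _ K).comp (Ideal.Quotient.mk J)
  have h0 : ∀ f, φ f = 0 ↔ f ∈ J := by
    intro f
    simp only [φ, RingHom.comp_apply]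
    rw [IsFractionRing.to_map_eq_zero_iff, Ideal.Quotient.eq_zero_iff_mem]
  exact h (aux_cycle src tgt (fun y => φ (X y) ≠ 0) x (by rwa [Ne, h0])
    fun y hy => aux_step src tgt φ (fun f hf => (h0 f).2 (hJ hf)) y hy)

theorem aux_finite (R : Type) [CommRing R] {E : Type} [Fintype E] (I : Ideal (MvPolynomial E R))
    (h : ∀ x : E, ∃ n : ℕ, (X x : MvPolynomial E R) ^ n ∈ I) :
    Module.Finite R (MvPolynomial E R ⧸ I) := by
  have : Algebra.IsIntegral R (MvPolynomial E R ⧸ I) := by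
    constructor
    intro a
    obtain ⟨p, rfl⟩ := Ideal.Quotient.mk_surjective a
    induction p using MvPolynomial.induction_on with
    | C r => exact isIntegral_algebraMap (R := R) (A := MvPolynomial E R ⧸ I) (x := r)
    | add p q hp hq => rw [map_add]; exact hp.add hq
    | mul_X p x hp =>
      rw [map_mul]
      refine hp.mul ?_
      obtain ⟨n, hn⟩ := h x
      refine IsIntegral.of_pow (n := n + 1) (by omega) ?_
      rw [← map_pow, Ideal.Quotient.eq_zero_iff_mem.2 (by rw [pow_succ]; exact I.mul_mem_right _ hn)]
      exact isIntegral_zero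
  exact Algebra.IsIntegral.finite

theorem aux_cycle_hom (R : Type) [CommRing R] {V E : Type} [Fintype E] [DecidableEq V]
    (src tgt : E → V) (h : ∃ C : Set E, IsCycle src tgt C) :
    ∃ φ : MvPolynomial E R ⧸ incidenceIdeal R src tgt →+* Polynomial R,
      Function.Surjective φ := by
  classical
  obtain ⟨_, c, rfl⟩ := h
  have hinj : Function.Injective c.edge := by
    intro i j hij
    apply c.vtx_inj
    rw [← c.edge_src, ← c.edge_src, hij]
  let g : E → Polynomial R := fun x => if x ∈ Set.range c.edge then Polynomial.X else 0
  let ψ : MvPolynomial E R →ₐ[R] Polynomial R := aeval g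
  have hes : ∀ (s : Finset E) (l : ℕ), ψ (esymmOf R s l) =
      ((s.filter (· ∈ Set.range c.edge)).card.choose l : Polynomial R) * Polynomial.X ^ l := by
    intro s l
    have : (Finset.powersetCard l s).filter (fun t => ∀ x ∈ t, x ∈ Set.range c.edge) =
        Finset.powersetCard l (s.filter (· ∈ Set.range c.edge)) := by
      ext t
      simp only [Finset.mem_filter, Finset.mem_powersetCard, Finset.subset_iff]
      grind
    rw [← Finset.card_powersetCard, ← this, ← nsmul_eq_mul, ← Finset.sum_const, Finset.sum_filter,
      esymmOf, map_sum]
    refine Finset.sum_congr rfl fun t ht => ?_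
    rw [map_prod]
    simp only [ψ, aeval_X, g]
    rw [Finset.prod_ite_zero, Finset.prod_const, (Finset.mem_powersetCard.1 ht).2]
    congr 1
  have hcard : ∀ v : V,
      ((Finset.univ.filter fun x => src x = v).filter (· ∈ Set.range c.edge)).card =
      ((Finset.univ.filter fun x => tgt x = v).filter (· ∈ Set.range c.edge)).card := by
    intro v
    have h1 : ((Finset.univ.filter fun x => src x = v).filter (· ∈ Set.range c.edge)) =
        (Finset.univ.filter fun i => c.vtx i = v).image c.edge := by
      ext x
      simp only [Finset.mem_filter, Finset.mem_univ, true_and, Finset.mem_image, Set.mem_range]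
      constructor
      · rintro ⟨hv, i, rfl⟩
        exact ⟨i, by rw [← hv, c.edge_src], rfl⟩
      · rintro ⟨i, hi, rfl⟩
        exact ⟨by rw [c.edge_src, hi], i, rfl⟩
    have h2 : ((Finset.univ.filter fun x => tgt x = v).filter (· ∈ Set.range c.edge)) =
        (Finset.univ.filter fun i => c.vtx (i + 1) = v).image c.edge := by
      ext x
      simp only [Finset.mem_filter, Finset.mem_univ, true_and, Finset.mem_image, Set.mem_range]
      constructor
      · rintro ⟨hv, i, rfl⟩
        exact ⟨i, by rw [← hv, c.edge_tgt], rfl⟩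
      · rintro ⟨i, hi, rfl⟩
        exact ⟨by rw [c.edge_tgt, hi], i, rfl⟩
    rw [h1, h2, Finset.card_image_of_injective _ hinj, Finset.card_image_of_injective _ hinj]
    symm
    refine Finset.card_bij (fun i _ => i + 1) (by simp) (by simp) ?_
    intro b hb
    exact ⟨b - 1, by simpa using hb, by simp⟩
  have hker : ∀ f ∈ incidenceIdeal R src tgt, ψ.toRingHom f = 0 := by
    intro f hf
    have : incidenceIdeal R src tgt ≤ RingHom.ker ψ.toRingHom := by
      refine Ideal.span_le.2 ?_
      rintro _ ⟨v, l, _, rfl⟩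
      change ψ _ = 0
      rw [map_sub, hes, hes, hcard, sub_self]
    exact this hf
  refine ⟨Ideal.Quotient.lift _ ψ.toRingHom hker, Ideal.Quotient.lift_surjective_of_surjective _ _ ?_⟩
  intro p
  refine ⟨Polynomial.aeval (X (c.edge 0)) p, ?_⟩
  change ψ _ = p
  rw [← Polynomial.aeval_algHom_apply]
  simp [ψ, g]

theorem aux_aug (R : Type) [CommRing R] {V E : Type} [Fintype E] [DecidableEq V]
    (src tgt : E → V) :
    ∃ φ : MvPolynomial E R ⧸ incidenceIdeal R src tgt →+* R, Function.Surjective φ := by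
  let ψ : MvPolynomial E R →ₐ[R] R := aeval (fun _ => 0)
  have hes : ∀ (s : Finset E) (l : ℕ), 1 ≤ l → ψ (esymmOf R s l) = 0 := by
    intro s l hl
    rw [esymmOf, map_sum]
    refine Finset.sum_eq_zero fun t ht => ?_
    rw [map_prod]
    have := (Finset.mem_powersetCard.1 ht).2
    simp only [ψ, aeval_X, Finset.prod_const]
    exact zero_pow (by omega)
  have : incidenceIdeal R src tgt ≤ RingHom.ker ψ.toRingHom := by
    refine Ideal.span_le.2 ?_
    rintro _ ⟨v, l, hl, rfl⟩
    change ψ _ = 0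
    rw [map_sub, hes _ _ hl, hes _ _ hl, sub_self]
  refine ⟨Ideal.Quotient.lift _ ψ.toRingHom (fun f hf => this hf),
    Ideal.Quotient.lift_surjective_of_surjective _ _ fun r => ⟨C r, ?_⟩⟩
  change ψ _ = r
  simp [ψ]

theorem aux_dim_le (R A : Type) [CommRing R] [CommRing A] [Algebra R A] [Algebra.IsIntegral R A] :
    ringKrullDim A ≤ ringKrullDim R := by
  refine Order.krullDim_le_of_strictMono (PrimeSpectrum.comap (algebraMap R A)) ?_
  intro p q hpq
  exact Ideal.IsIntegral.comap_lt_comap (I := p.asIdeal) (J := q.asIdeal) hpq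

theorem stmt7 {V E : Type} [Fintype V] [Fintype E] [DecidableEq V] [DecidableEq E]
    (src tgt : E → V) :
    List.TFAE
      [¬ ∃ C : Set E, IsCycle src tgt C,
       Module.Finite ℤ (MvPolynomial E ℤ ⧸ incidenceIdeal ℤ src tgt),
       ∃ n : ℕ, 1 ≤ n ∧ ∀ x : E, (X x : MvPolynomial E ℤ) ^ n ∈ incidenceIdeal ℤ src tgt,
       ringKrullDim (MvPolynomial E ℤ ⧸ incidenceIdeal ℤ src tgt) = 1,
       ringKrullDim (MvPolynomial E ℚ ⧸ incidenceIdeal ℚ src tgt) = 0] := by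
  have hZ : ringKrullDim ℤ = 1 := IsPrincipalIdealRing.ringKrullDim_eq_one ℤ Int.not_isField
  tfae_have 1 → 3 := by
    intro h
    choose n hn using aux_nilp ℤ src tgt h
    refine ⟨∑ x, n x + 1, by omega, fun x => ?_⟩
    have : n x ≤ ∑ x, n x := Finset.single_le_sum (fun _ _ => Nat.zero_le _) (Finset.mem_univ x)
    exact Ideal.pow_mem_of_pow_mem _ (hn x) (by omega)
  tfae_have 3 → 2 := by
    rintro ⟨n, _, h⟩
    exact aux_finite ℤ _ fun x => ⟨n, h x⟩
  tfae_have 2 → 4 := by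
    intro h
    have : Algebra.IsIntegral ℤ (MvPolynomial E ℤ ⧸ incidenceIdeal ℤ src tgt) :=
      Algebra.IsIntegral.of_finite _ _
    obtain ⟨φ, hφ⟩ := aux_aug ℤ src tgt
    exact le_antisymm (hZ ▸ aux_dim_le ℤ _) (hZ ▸ ringKrullDim_le_of_surjective φ hφ)
  tfae_have 4 → 1 := by
    intro h hc
    obtain ⟨φ, hφ⟩ := aux_cycle_hom ℤ src tgt hc
    have := ringKrullDim_le_of_surjective φ hφ
    rw [h, Polynomial.ringKrullDim_of_isNoetherianRing, hZ] at this
    exact absurd this (by decide)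
  tfae_have 1 → 5 := by
    intro h
    have := aux_finite ℚ _ (aux_nilp ℚ src tgt h)
    have : Algebra.IsIntegral ℚ (MvPolynomial E ℚ ⧸ incidenceIdeal ℚ src tgt) :=
      Algebra.IsIntegral.of_finite _ _
    obtain ⟨φ, hφ⟩ := aux_aug ℚ src tgt
    have hQ := ringKrullDim_eq_zero_of_field ℚ
    exact le_antisymm (hQ ▸ aux_dim_le ℚ _) (hQ ▸ ringKrullDim_le_of_surjective φ hφ)
  tfae_have 5 → 1 := by
    intro h hc
    obtain ⟨φ, hφ⟩ := aux_cycle_hom ℚ src tgt hc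
    have := ringKrullDim_le_of_surjective φ hφ
    rw [h, Polynomial.ringKrullDim_of_isNoetherianRing, ringKrullDim_eq_zero_of_field ℚ] at this
    exact absurd this (by decide)
  tfae_finish
end

section
/- Let G be a directed graph and E a subset of E(G). Then α_E(G) is at most the Krull dimension of ℚ[E]/(I_ℚ(G) ∩ ℚ[E]), which in turn is at most the Krull dimension of ℤ[E]/(I(G) ∩ ℤ[E]) minus 1. -/
open MvPolynomial

/-- `α_F(G)`: the maximal number of pairwise edge-disjoint directed cycles, each of which
contains at least one edge in `F`. -/
noncomputable def cyclePackingThrough {V E : Type} (src tgt : E → V) (F : Set E) : ℕ :=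
  sSup {k | ∃ f : Fin k → Set E, (∀ i, IsCycle src tgt (f i)) ∧
    (∀ i, ∃ x ∈ f i, x ∈ F) ∧ ∀ i j, i ≠ j → Disjoint (f i) (f j)}


/-- `ℤ` is a Jacobson ring. -/
theorem int_isJacobsonRing : IsJacobsonRing ℤ := by
  rw [isJacobsonRing_iff_prime_eq]
  intro P hP
  by_cases h : P = ⊥
  · subst h
    refine le_antisymm (fun x hx => ?_) Ideal.le_jacobson
    rw [Ideal.mem_jacobson_bot] at hx
    have h1 := hx x
    rw [Int.isUnit_iff] at h1
    rw [Ideal.mem_bot]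
    rcases h1 with h1 | h1
    · have : x * x = 0 := by linarith
      simpa using this
    · nlinarith [mul_self_nonneg x]
  · have := hP.isMaximal h
    exact Ideal.jacobson_eq_self_of_isMaximal

/-- Order-theoretic step: a strictly monotone map into non-maximal elements raises dimension. -/
theorem krullDim_add_one_le {α β : Type*} [Preorder α] [Preorder β] (f : α → β)
    (hf : StrictMono f) (h : ∀ a, ∃ b, f a < b) :
    Order.krullDim α + 1 ≤ Order.krullDim β := by
  have h0 := Order.krullDim_le_of_strictMono f hf
  rcases hd : Order.krullDim α with _ | _ | n
  · exact bot_le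
  · rw [hd] at h0
    exact le_trans le_top h0
  · have : (n : WithBot ℕ∞) ≤ Order.krullDim α := by rw [hd]; exact le_rfl
    rw [Order.le_krullDim_iff] at this
    obtain ⟨l, hl⟩ := this
    obtain ⟨b, hb⟩ := h l.last
    have h2 : ((n + 1 : ℕ) : WithBot ℕ∞) ≤ Order.krullDim β := by
      rw [Order.le_krullDim_iff]
      refine ⟨(l.map f hf).snoc b ?_, ?_⟩
      · simpa using hb
      · simp [hl]
    exact h2

/-- Commutative algebra step. -/
theorem ringKrullDim_add_one_le_of_int {A B σ : Type*} [CommRing A] [CommRing B] [Algebra ℚ B]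
    [Finite σ] (q : MvPolynomial σ ℤ →+* A) (hq : Function.Surjective q) (φ : A →+* B)
    (hφ : ∀ b : B, ∃ (n : ℤ) (a : A), n ≠ 0 ∧ φ a = n * b) :
    ringKrullDim B + 1 ≤ ringKrullDim A := by
  have unit : ∀ n : ℤ, n ≠ 0 → IsUnit (n : B) := by
    intro n hn
    have : (n : B) = algebraMap ℚ B n := by simp
    rw [this]
    exact (IsUnit.mk0 (n : ℚ) (by exact_mod_cast hn)).map _
  have key : ∀ P Q : PrimeSpectrum B,
      PrimeSpectrum.comap φ P ≤ PrimeSpectrum.comap φ Q → P ≤ Q := by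
    intro P Q h b hb
    obtain ⟨n, a, hn, ha⟩ := hφ b
    have h1 : a ∈ (PrimeSpectrum.comap φ P).asIdeal := by
      change φ a ∈ P.asIdeal
      rw [ha]
      exact Ideal.mul_mem_left _ _ hb
    have h2 : φ a ∈ Q.asIdeal := h h1
    rw [ha] at h2
    exact (Ideal.unit_mul_mem_iff_mem _ (unit n hn)).1 h2
  have mono : Monotone (PrimeSpectrum.comap φ) := fun P Q h a ha => h ha
  refine krullDim_add_one_le (PrimeSpectrum.comap φ) ?_ ?_
  · intro P Q h
    exact lt_of_le_not_ge (mono h.le) fun h' => h.not_ge (key _ _ h')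
  · intro P
    set I := (PrimeSpectrum.comap φ P).asIdeal with hI
    have hIp : I.IsPrime := (PrimeSpectrum.comap φ P).isPrime
    obtain ⟨M, hM, hIM⟩ := Ideal.exists_le_maximal I hIp.ne_top
    refine ⟨⟨M, hM.isPrime⟩, lt_of_le_of_ne hIM ?_⟩
    intro heq
    have hIM' : I = M := by rw [hI, heq]
    have hImax : I.IsMaximal := hIM' ▸ hM
    have := int_isJacobsonRing
    let _ := Ideal.Quotient.field I
    have hint := MvPolynomial.comp_C_integral_of_surjective_of_isJacobsonRing
      ((Ideal.Quotient.mk I).comp q) (Ideal.Quotient.mk_surjective.comp hq)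
    have heq2 : (((Ideal.Quotient.mk I).comp q).comp C) = algebraMap ℤ (A ⧸ I) :=
      RingHom.ext_int _ _
    rw [heq2] at hint
    have : Algebra.IsIntegral ℤ (A ⧸ I) := ⟨hint⟩
    refine Int.not_isField (isField_of_isIntegral_of_isField (S := A ⧸ I) ?_
      (Field.toIsField _))
    rw [injective_iff_map_eq_zero]
    intro n hn
    by_contra hne
    have h3 : (n : A) ∈ I := by
      rw [← Ideal.Quotient.eq_zero_iff_mem]
      simpa using hn
    have h4 : φ (n : A) ∈ P.asIdeal := h3
    rw [map_intCast] at h4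
    exact P.isPrime.ne_top (Ideal.eq_top_of_isUnit_mem _ h4 (unit n hne))

/-- Clearing denominators. -/
theorem exists_int_mul {σ : Type*} (p : MvPolynomial σ ℚ) :
    ∃ (n : ℤ) (a : MvPolynomial σ ℤ), n ≠ 0 ∧
      MvPolynomial.map (Int.castRingHom ℚ) a = (n : MvPolynomial σ ℚ) * p := by
  induction p using MvPolynomial.induction_on with
  | C r =>
    refine ⟨r.den, C r.num, by exact_mod_cast r.den_nz, ?_⟩
    have : ((r.den : ℤ) : MvPolynomial σ ℚ) = C (r.den : ℚ) := by simp
    rw [this, ← C_mul, map_C, mul_comm, Rat.mul_den_eq_num]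
    rfl
  | add p q hp hq =>
    obtain ⟨n, a, hn, ha⟩ := hp
    obtain ⟨m, b, hm, hb⟩ := hq
    refine ⟨n * m, m * a + n * b, mul_ne_zero hn hm, ?_⟩
    rw [map_add, map_mul, map_mul, ha, hb, map_intCast, map_intCast]
    push_cast
    ring
  | mul_X p i hp =>
    obtain ⟨n, a, hn, ha⟩ := hp
    refine ⟨n, a * X i, hn, ?_⟩
    rw [map_mul, ha, map_X]
    ring

theorem map_esymmOf {E : Type} (s : Finset E) (l : ℕ) :
    MvPolynomial.map (Int.castRingHom ℚ) (esymmOf ℤ s l) = esymmOf ℚ s l := by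
  simp [esymmOf]

theorem map_incidenceIdeal_le {V E : Type} [Fintype E] [DecidableEq V] (src tgt : E → V) :
    incidenceIdeal ℤ src tgt ≤
      Ideal.comap (MvPolynomial.map (Int.castRingHom ℚ)) (incidenceIdeal ℚ src tgt) := by
  conv_lhs => unfold incidenceIdeal
  rw [Ideal.span_le]
  rintro f ⟨v, l, hl, rfl⟩
  change MvPolynomial.map (Int.castRingHom ℚ) _ ∈ incidenceIdeal ℚ src tgt
  rw [map_sub, map_esymmOf, map_esymmOf]
  exact Ideal.subset_span ⟨v, l, hl, rfl⟩

theorem second_part {V E : Type} [Fintype E] [DecidableEq V] (src tgt : E → V) (F : Set E) :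
    ringKrullDim (MvPolynomial F ℚ ⧸
          Ideal.comap (MvPolynomial.rename (Subtype.val : F → E)).toRingHom
            (incidenceIdeal ℚ src tgt)) + 1 ≤
        ringKrullDim (MvPolynomial F ℤ ⧸
          Ideal.comap (MvPolynomial.rename (Subtype.val : F → E)).toRingHom
            (incidenceIdeal ℤ src tgt)) := by
  have : Finite F := Subtype.finite
  refine ringKrullDim_add_one_le_of_int (Ideal.Quotient.mk _) Ideal.Quotient.mk_surjective
    (Ideal.quotientMap _ (MvPolynomial.map (Int.castRingHom ℚ)) ?_) ?_
  · intro a ha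
    have h1 := map_incidenceIdeal_le src tgt ha
    change MvPolynomial.map (Int.castRingHom ℚ) (rename Subtype.val a) ∈ incidenceIdeal ℚ src tgt at h1
    change rename Subtype.val (MvPolynomial.map (Int.castRingHom ℚ) a) ∈ incidenceIdeal ℚ src tgt
    rwa [← map_rename]
  · intro b
    obtain ⟨p, rfl⟩ := Ideal.Quotient.mk_surjective b
    obtain ⟨n, a, hn, ha⟩ := exists_int_mul p
    refine ⟨n, Ideal.Quotient.mk _ a, hn, ?_⟩
    rw [Ideal.quotientMap_mk, ha, map_mul, map_intCast]

theorem aeval_esymmOf_s9 {E ι S : Type} [CommRing S] [Algebra ℚ S] [Fintype E]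
    (g : E → S) (e : ι ↪ E) (hg : ∀ x, x ∉ Set.range e → g x = 0)
    (s : Finset E) (t : Finset ι) (hst : ∀ p, p ∈ t ↔ e p ∈ s) (l : ℕ) :
    aeval g (esymmOf ℚ s l) = (t.val.map (g ∘ e)).esymm l := by
  have h1 : (t.val.map (g ∘ e)) = ((t.map e).val.map g) := by
    rw [Finset.map_val, Multiset.map_map]
  rw [h1, Finset.esymm_map_val, esymmOf, map_sum]
  simp only [map_prod, aeval_X]
  symm
  apply Finset.sum_subset
  · apply Finset.powersetCard_mono
    intro x hx
    obtain ⟨p, hp, rfl⟩ := Finset.mem_map.1 hx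
    exact (hst p).1 hp
  · intro u hu hu'
    rw [Finset.mem_powersetCard] at hu hu'
    have : ¬ u ⊆ t.map e := fun h => hu' ⟨h, hu.2⟩
    rw [Finset.not_subset] at this
    obtain ⟨x, hx, hxt⟩ := this
    apply Finset.prod_eq_zero hx
    apply hg
    rintro ⟨p, rfl⟩
    exact hxt (Finset.mem_map_of_mem _ ((hst p).2 (hu.1 hx)))

theorem first_part {V E : Type} [Fintype E] [DecidableEq V] (src tgt : E → V) (F : Set E)
    (k : ℕ) (f : Fin k → Set E) (hf : ∀ i, IsCycle src tgt (f i))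
    (hF : ∀ i, ∃ x ∈ f i, x ∈ F) (hd : ∀ i j, i ≠ j → Disjoint (f i) (f j)) :
    (k : WithBot (WithTop ℕ)) ≤
        ringKrullDim (MvPolynomial F ℚ ⧸
          Ideal.comap (MvPolynomial.rename (Subtype.val : F → E)).toRingHom
            (incidenceIdeal ℚ src tgt)) := by
  classical
  choose c hc using hf
  let e : (Σ i : Fin k, ZMod ((c i).n + 1)) ↪ E := ⟨fun p => (c p.1).edge p.2, by
    rintro ⟨i, a⟩ ⟨j, b⟩ h
    have hij : i = j := by
      by_contra hne
      have hdis := Set.disjoint_left.1 (hd i j hne)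
      refine @hdis ((c i).edge a) ?_ ?_
      · rw [hc]; exact ⟨a, rfl⟩
      · rw [hc]; exact ⟨b, h.symm⟩
    subst hij
    have h' : (c i).edge a = (c i).edge b := h
    have : (c i).vtx a = (c i).vtx b := by
      rw [← (c i).edge_src, ← (c i).edge_src, h']
    rw [(c i).vtx_inj this]⟩
  let g : E → MvPolynomial (Fin k) ℚ := Function.extend e (fun p => X p.1) 0
  have hge : ∀ p, g (e p) = X p.1 := fun p => e.injective.extend_apply _ _ _
  have hg0 : ∀ x, x ∉ Set.range e → g x = 0 := fun x hx =>
    Function.extend_apply' _ _ _ fun ⟨p, hp⟩ => hx ⟨p, hp⟩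
  let s : (Σ i : Fin k, ZMod ((c i).n + 1)) ↪ (Σ i : Fin k, ZMod ((c i).n + 1)) :=
    (Equiv.sigmaCongrRight fun i => Equiv.addRight (1 : ZMod ((c i).n + 1))).toEmbedding
  have hs : ∀ p, src (e (s p)) = tgt (e p) := by
    rintro ⟨i, a⟩
    change src ((c i).edge (a + 1)) = tgt ((c i).edge a)
    rw [(c i).edge_src, (c i).edge_tgt]
  have hker : ∀ a ∈ incidenceIdeal ℚ src tgt, aeval g a = 0 := by
    suffices incidenceIdeal ℚ src tgt ≤ RingHom.ker (aeval g).toRingHom from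
      fun a ha => this ha
    unfold incidenceIdeal
    rw [Ideal.span_le]
    rintro _ ⟨v, l, -, rfl⟩
    change aeval g _ = 0
    rw [map_sub, sub_eq_zero,
      aeval_esymmOf_s9 g e hg0 _ (Finset.univ.filter fun p => src (e p) = v) (by simp),
      aeval_esymmOf_s9 g e hg0 _ (Finset.univ.filter fun p => tgt (e p) = v) (by simp)]
    have h1 : (Finset.univ.filter fun p => src (e p) = v) =
        (Finset.univ.filter fun p => tgt (e p) = v).map s := by
      ext p
      obtain ⟨p, rfl⟩ : ∃ p', s p' = p := Equiv.surjective _ p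
      simp only [Finset.mem_map', Finset.mem_filter, Finset.mem_univ, true_and, hs]
    rw [h1, Finset.map_val, Multiset.map_map]
    congr 1
    apply Multiset.map_congr rfl
    intro p _
    change g (e (s p)) = g (e p)
    rw [hge, hge]
    rfl
  let ψ : MvPolynomial F ℚ →+* MvPolynomial (Fin k) ℚ :=
    (aeval g).toRingHom.comp (rename (Subtype.val : F → E)).toRingHom
  let Ψ := Ideal.Quotient.lift (Ideal.comap (rename (Subtype.val : F → E)).toRingHom
            (incidenceIdeal ℚ src tgt)) ψ (fun a ha => hker _ ha)
  have hψ : Function.Surjective ψ := by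
    choose x hx hxF using hF
    intro p
    refine ⟨rename (fun i => (⟨x i, hxF i⟩ : F)) p, ?_⟩
    change aeval g (rename _ (rename _ p)) = p
    rw [rename_rename, aeval_rename]
    have : g ∘ ((Subtype.val : F → E) ∘ fun i => (⟨x i, hxF i⟩ : F)) = X := by
      funext i
      have h1 := hx i
      rw [hc] at h1
      obtain ⟨a, ha⟩ := h1
      change g (x i) = X i
      rw [← ha]
      exact hge ⟨i, a⟩
    rw [this, aeval_X_left_apply]
  have hΨ : Function.Surjective Ψ := Ideal.Quotient.lift_surjective_of_surjective _ _ hψ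
  have h1 := ringKrullDim_le_of_surjective Ψ hΨ
  rw [MvPolynomial.ringKrullDim_of_isNoetherianRing, ringKrullDim_eq_zero_of_field] at h1
  have h2 : (k : WithBot ℕ∞) ≤ _ := le_trans (by simp) h1
  exact h2

theorem stmt9 {V E : Type} [Fintype V] [Fintype E] [DecidableEq V] [DecidableEq E]
    (src tgt : E → V) (F : Set E) :
    (cyclePackingThrough src tgt F : WithBot (WithTop ℕ)) ≤
        ringKrullDim (MvPolynomial F ℚ ⧸
          Ideal.comap (MvPolynomial.rename (Subtype.val : F → E)).toRingHom
            (incidenceIdeal ℚ src tgt)) ∧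
      ringKrullDim (MvPolynomial F ℚ ⧸
          Ideal.comap (MvPolynomial.rename (Subtype.val : F → E)).toRingHom
            (incidenceIdeal ℚ src tgt)) + 1 ≤
        ringKrullDim (MvPolynomial F ℤ ⧸
          Ideal.comap (MvPolynomial.rename (Subtype.val : F → E)).toRingHom
            (incidenceIdeal ℤ src tgt)) := by
  refine ⟨?_, second_part src tgt F⟩
  have hmem : cyclePackingThrough src tgt F ∈ {k | ∃ f : Fin k → Set E,
      (∀ i, IsCycle src tgt (f i)) ∧
      (∀ i, ∃ x ∈ f i, x ∈ F) ∧ ∀ i j, i ≠ j → Disjoint (f i) (f j)} := by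
    have h0 : 0 ∈ {k | ∃ f : Fin k → Set E, (∀ i, IsCycle src tgt (f i)) ∧
        (∀ i, ∃ x ∈ f i, x ∈ F) ∧ ∀ i j, i ≠ j → Disjoint (f i) (f j)} :=
      ⟨fun i => i.elim0, fun i => i.elim0, fun i => i.elim0, fun i => i.elim0⟩
    unfold cyclePackingThrough
    by_cases hb : BddAbove {k | ∃ f : Fin k → Set E, (∀ i, IsCycle src tgt (f i)) ∧
        (∀ i, ∃ x ∈ f i, x ∈ F) ∧ ∀ i j, i ≠ j → Disjoint (f i) (f j)}
    · exact Nat.sSup_mem ⟨0, h0⟩ hb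
    · rw [Nat.sSup_of_not_bddAbove hb]
      exact h0
  obtain ⟨f, h1, h2, h3⟩ := hmem
  exact first_part src tgt F _ f h1 h2 h3
end

section
/- Let G be a directed graph, v a vertex of G, and E(v) the set of all edges of G incident at v. The following are equivalent: (1) there is no directed cycle in G containing v; (2) ℤ[E(v)]/(I(G) ∩ ℤ[E(v)]) is finitely generated as a ℤ-module; (3) there is an integer n ≥ 1 such that x^n ∈ I(G) for every x ∈ E(v); (4) the Krull dimension of ℤ[E(v)]/(I(G) ∩ ℤ[E(v)]) equals 1; (5) the Krull dimension of ℚ[E(v)]/(I_ℚ(G) ∩ ℚ[E(v)]) equals 0. -/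
open MvPolynomial

theorem walk_of_reach {V E : Type} (src tgt : E → V) (S : Finset E) (x : E) (w : V)
    (h : Relation.ReflTransGen (fun a b => ∃ e ∈ S, src e = a ∧ tgt e = b) (tgt x) w) :
    ∃ (n : ℕ) (e : ℕ → E), e 0 = x ∧ (∀ i < n, tgt (e i) = src (e (i + 1))) ∧ tgt (e n) = w := by
  induction h with
  | refl => exact ⟨0, fun _ => x, rfl, by simp, rfl⟩
  | tail _ hbc ih =>
    obtain ⟨n, e, h0, hi, hn⟩ := ih
    obtain ⟨y, _, hy1, hy2⟩ := hbc
    refine ⟨n + 1, fun i => if i ≤ n then e i else y, by simpa using h0, ?_, by simpa using hy2⟩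
    intro i hin
    rcases Nat.lt_succ_iff_lt_or_eq.mp hin with h | h
    · simp [h.le, Nat.succ_le_of_lt h, hi i h]
    · subst h
      simp [hn, hy1]

theorem cycle_of_walk {V E : Type} (src tgt : E → V) (v : V)
    (h : ∃ (n : ℕ) (e : ℕ → E), src (e 0) = v ∧ (∀ i < n, tgt (e i) = src (e (i + 1))) ∧
      tgt (e n) = v) :
    ∃ C : Set E, IsCycle src tgt C ∧ v ∈ src '' C := by
  classical
  have hspec := Nat.find_spec h
  have hmin := fun m => @Nat.find_min _ _ h m
  generalize Nat.find h = n at hspec hmin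
  obtain ⟨e, h0, hi, hn⟩ := hspec
  have hinj : ∀ i j, i < j → j ≤ n → src (e i) ≠ src (e j) := by
    intro i j hij hj heq
    refine hmin (n - (j - i)) (by omega) ⟨fun k => if k < i then e k else e (k + (j - i)), ?_, ?_, ?_⟩
    · by_cases h : 0 < i
      · simp [h, h0]
      · have : i = 0 := by omega
        subst this
        simp [← heq, h0]
    · intro k hk
      by_cases h1 : k + 1 < i
      · have : k < i := by omega
        simp only [h1, this, if_true]
        exact hi k (by omega)
      · by_cases h2 : k < i
        · have : k + 1 = i := by omega
          simp only [h1, h2, if_true, if_false]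
          rw [hi k (by omega), this, heq]
          congr 2
          omega
        · simp only [h1, h2, if_false]
          rw [hi _ (by omega)]
          congr 2
          omega
    · have : ¬ (n - (j - i) < i) := by omega
      simp only [this, if_false]
      rw [← hn]
      congr 2
      omega
  let c : DirCycle src tgt :=
    { n := n
      vtx := fun i : Fin (n + 1) => src (e i.val)
      edge := fun i : Fin (n + 1) => e i.val
      vtx_inj := by
        intro (i : Fin (n + 1)) (j : Fin (n + 1)) hij
        have hi' := i.2
        have hj' := j.2
        rcases lt_trichotomy i.val j.val with h | h | h
        · exact absurd hij (hinj _ _ h (by omega))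
        · exact Fin.ext h
        · exact absurd hij.symm (hinj _ _ h (by omega))
      edge_src := fun i => rfl
      edge_tgt := by
        intro (i : Fin (n + 1))
        change tgt (e i.val) = src (e (i + 1 : Fin (n + 1)).val)
        rw [Fin.val_add_one]
        split_ifs with h
        · subst h
          simp [hn, h0]
        · exact hi _ (Fin.val_lt_last h) }
  exact ⟨Set.range c.edge, ⟨c, rfl⟩, ⟨e 0, ⟨(0 : Fin (n + 1)), rfl⟩, h0⟩⟩

theorem cycle_of_balanced {V E : Type} [Fintype V] [DecidableEq V] [DecidableEq E]
    (src tgt : E → V) (S : Finset E)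
    (hS : ∀ w, (S.filter fun e => src e = w).card = (S.filter fun e => tgt e = w).card)
    (x : E) (hx : x ∈ S) :
    ∃ C : Set E, IsCycle src tgt C ∧ src x ∈ src '' C := by
  classical
  set r : V → V → Prop := fun a b => ∃ e ∈ S, src e = a ∧ tgt e = b with hr
  let T : Finset V := Finset.univ.filter fun w => Relation.ReflTransGen r (tgt x) w
  have h1 : (S.filter fun e => src e ∈ T).card = (S.filter fun e => tgt e ∈ T).card := by
    rw [Finset.card_eq_sum_card_fiberwise (f := src) (t := T) (by intro e; simp),
      Finset.card_eq_sum_card_fiberwise (f := tgt) (t := T) (by intro e; simp)]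
    refine Finset.sum_congr rfl fun w hw => ?_
    convert hS w using 2 <;> (ext e; simp only [Finset.mem_filter]; constructor)
    · exact fun h => ⟨h.1.1, h.2⟩
    · exact fun h => ⟨⟨h.1, h.2 ▸ hw⟩, h.2⟩
    · exact fun h => ⟨h.1.1, h.2⟩
    · exact fun h => ⟨⟨h.1, h.2 ▸ hw⟩, h.2⟩
  have h2 : (S.filter fun e => src e ∈ T) ⊆ (S.filter fun e => tgt e ∈ T) := by
    intro e he
    simp only [T, Finset.mem_filter, Finset.mem_univ, true_and] at he ⊢
    exact ⟨he.1, he.2.tail ⟨e, he.1, rfl, rfl⟩⟩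
  have h3 := Finset.eq_of_subset_of_card_le h2 h1.ge
  have h4 : x ∈ S.filter fun e => tgt e ∈ T := by
    simp only [T, Finset.mem_filter, Finset.mem_univ, true_and]
    exact ⟨hx, .refl⟩
  rw [← h3] at h4
  simp only [T, Finset.mem_filter, Finset.mem_univ, true_and] at h4
  obtain ⟨n, e, he0, hi, hn⟩ := walk_of_reach src tgt S x _ h4.2
  exact cycle_of_walk src tgt _ ⟨n, e, by rw [he0], hi, hn⟩

theorem genfun {K E : Type} [CommRing K] (a : E → K) (s : Finset E) (N : ℕ) (hN : s.card < N) :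
    ∏ e ∈ s, (1 + Polynomial.C (a e) * Polynomial.X) =
      ∑ l ∈ Finset.range N, Polynomial.C (∑ t ∈ s.powersetCard l, ∏ e ∈ t, a e) *
        Polynomial.X ^ l := by
  classical
  rw [Finset.prod_one_add, ← Finset.sum_fiberwise_of_maps_to (t := Finset.range N)
    (g := Finset.card)]
  · refine Finset.sum_congr rfl fun l _ => ?_
    rw [map_sum, Finset.sum_mul, Finset.powersetCard_eq_filter]
    refine Finset.sum_congr rfl fun t ht => ?_
    rw [Finset.prod_mul_distrib, Finset.prod_const, (Finset.mem_filter.mp ht).2, map_prod]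
  · intro t ht
    exact Finset.mem_range.mpr ((Finset.card_le_card (Finset.mem_powerset.mp ht)).trans_lt hN)

theorem count_roots_genfun {K E : Type} [Field K] [DecidableEq K] (a : E → K) (s : Finset E)
    (c : K) (hc : c ≠ 0) :
    (∏ e ∈ s, (1 + Polynomial.C (a e) * Polynomial.X)).roots.count (-c⁻¹) =
      (s.filter fun e => a e = c).card := by
  classical
  have hne : ∀ e, (1 + Polynomial.C (a e) * Polynomial.X) ≠ 0 := by
    intro e h
    have := congrArg (Polynomial.eval 0) h
    simp at this
  rw [Polynomial.roots_prod _ _ (Finset.prod_ne_zero_iff.mpr fun e _ => hne e),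
    Multiset.count_bind, Finset.card_filter]
  change ∑ e ∈ s, _ = _
  refine Finset.sum_congr rfl fun e _ => ?_
  by_cases h : a e = 0
  · simp [h, hc.symm]
  · have := Polynomial.roots_C_mul_X_add_C (a := a e) 1 h
    rw [Polynomial.C_1, add_comm] at this
    rw [this, Multiset.count_singleton]
    simp [eq_comm]

theorem nilp_of_no_cycle (R : Type) [CommRing R] {V E : Type} [Fintype V] [Fintype E]
    [DecidableEq V] [DecidableEq E] (src tgt : E → V) (v : V)
    (h : ¬ ∃ C : Set E, IsCycle src tgt C ∧ v ∈ src '' C) (x : E) (hx : src x = v ∨ tgt x = v) :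
    (X x : MvPolynomial E R) ∈ (incidenceIdeal R src tgt).radical := by
  classical
  rw [Ideal.radical_eq_sInf, Ideal.mem_sInf]
  rintro P ⟨hIP, hP⟩
  by_contra hxP
  let K := FractionRing (MvPolynomial E R ⧸ P)
  let φ : MvPolynomial E R →+* K := (algebraMap (MvPolynomial E R ⧸ P) K).comp (Ideal.Quotient.mk P)
  have hφ : ∀ p, φ p = 0 ↔ p ∈ P := by
    intro p
    rw [← Ideal.Quotient.eq_zero_iff_mem]
    exact map_eq_zero_iff _ (IsFractionRing.injective (MvPolynomial E R ⧸ P) K)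
  let a : E → K := fun e => φ (X e)
  have hes : ∀ s l, φ (esymmOf R s l) = ∑ t ∈ s.powersetCard l, ∏ e ∈ t, a e := by
    intro s l
    simp [esymmOf, map_sum, map_prod, a]
  have hbal : ∀ w, ∏ e ∈ Finset.univ.filter (fun e => src e = w),
      (1 + Polynomial.C (a e) * Polynomial.X) = ∏ e ∈ Finset.univ.filter (fun e => tgt e = w),
      (1 + Polynomial.C (a e) * Polynomial.X) := by
    intro w
    rw [genfun a _ (Fintype.card E + 1) (Nat.lt_succ_of_le (Finset.card_le_univ _)),
      genfun a _ (Fintype.card E + 1) (Nat.lt_succ_of_le (Finset.card_le_univ _))]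
    refine Finset.sum_congr rfl fun l _ => ?_
    rw [← hes, ← hes]
    rcases Nat.eq_zero_or_pos l with hl | hl
    · subst hl
      simp [esymmOf]
    · congr 2
      rw [← sub_eq_zero, ← map_sub, hφ]
      exact hIP (Ideal.subset_span ⟨w, l, hl, rfl⟩)
  have hc : a x ≠ 0 := fun h0 => hxP ((hφ _).mp h0)
  let S : Finset E := Finset.univ.filter fun e => a e = a x
  have hS : ∀ w, (S.filter fun e => src e = w).card = (S.filter fun e => tgt e = w).card := by
    intro w
    have := congrArg (fun p => p.roots.count (-(a x)⁻¹)) (hbal w)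
    simp only [count_roots_genfun a _ _ hc] at this
    simp only [S]
    rw [Finset.filter_comm, this, Finset.filter_comm]
  have hxS : x ∈ S := by simp [S]
  rcases hx with hx | hx
  · exact h (hx ▸ cycle_of_balanced src tgt S hS x hxS)
  · have h1 : 0 < (S.filter fun e => tgt e = v).card :=
      Finset.card_pos.mpr ⟨x, Finset.mem_filter.mpr ⟨hxS, hx⟩⟩
    rw [← hS, Finset.card_pos] at h1
    obtain ⟨y, hy⟩ := h1
    rw [Finset.mem_filter] at hy
    exact h (hy.2 ▸ cycle_of_balanced src tgt S hS y hy.1)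

/-- The evaluation at a cycle. -/
noncomputable def cycEval (R : Type) [CommRing R] {E : Type} (C : Set E) [DecidablePred (· ∈ C)] :
    MvPolynomial E R →ₐ[R] Polynomial R :=
  MvPolynomial.aeval fun e => if e ∈ C then Polynomial.X else 0

theorem cycEval_esymm (R : Type) [CommRing R] {E : Type} (C : Set E) [DecidablePred (· ∈ C)]
    (s : Finset E) (l : ℕ) :
    cycEval R C (esymmOf R s l) =
      ((s.filter (· ∈ C)).card.choose l : Polynomial R) * Polynomial.X ^ l := by
  classical
  simp only [cycEval, esymmOf, map_sum, map_prod, aeval_X]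
  have : ∀ t ∈ s.powersetCard l, (∏ e ∈ t, if e ∈ C then (Polynomial.X : Polynomial R) else 0) =
      if ∀ e ∈ t, e ∈ C then Polynomial.X ^ l else 0 := by
    intro t ht
    rw [Finset.prod_ite_zero, Finset.prod_const, (Finset.mem_powersetCard.mp ht).2]
  rw [Finset.sum_congr rfl this, ← Finset.sum_filter, Finset.sum_const, nsmul_eq_mul,
    ← Finset.card_powersetCard]
  congr 3
  ext t
  simp only [Finset.mem_filter, Finset.mem_powersetCard, Finset.subset_iff]
  grind

theorem cycEval_zero (R : Type) [CommRing R] {V E : Type} [Fintype E]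
    [DecidableEq V] (src tgt : E → V) (C : Set E) [DecidablePred (· ∈ C)]
    (hC : IsCycle src tgt C) (p : MvPolynomial E R) (hp : p ∈ incidenceIdeal R src tgt) :
    cycEval R C p = 0 := by
  classical
  obtain ⟨c, rfl⟩ := hC
  suffices incidenceIdeal R src tgt ≤ RingHom.ker (cycEval R (Set.range c.edge)).toRingHom from
    this hp
  rw [incidenceIdeal, Ideal.span_le]
  rintro _ ⟨w, l, _, rfl⟩
  change cycEval R (Set.range c.edge) _ = 0
  rw [map_sub, cycEval_esymm, cycEval_esymm, sub_eq_zero]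
  have hinj : Function.Injective c.edge := by
    intro i j hij
    apply c.vtx_inj
    rw [← c.edge_src, ← c.edge_src, hij]
  have h1 : (Finset.univ.filter (fun e => src e = w)).filter (· ∈ Set.range c.edge) =
      (Finset.univ.filter fun i => c.vtx i = w).image c.edge := by
    ext e
    simp only [Finset.mem_filter, Finset.mem_univ, true_and, Finset.mem_image, Set.mem_range]
    constructor
    · rintro ⟨h, i, rfl⟩
      exact ⟨i, by rw [← c.edge_src, h], rfl⟩
    · rintro ⟨i, h, rfl⟩
      exact ⟨by rw [c.edge_src, h], i, rfl⟩
  have h2 : (Finset.univ.filter (fun e => tgt e = w)).filter (· ∈ Set.range c.edge) =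
      (Finset.univ.filter fun i => c.vtx (i + 1) = w).image c.edge := by
    ext e
    simp only [Finset.mem_filter, Finset.mem_univ, true_and, Finset.mem_image, Set.mem_range]
    constructor
    · rintro ⟨h, i, rfl⟩
      exact ⟨i, by rw [← c.edge_tgt, h], rfl⟩
    · rintro ⟨i, h, rfl⟩
      exact ⟨by rw [c.edge_tgt, h], i, rfl⟩
  rw [h1, h2, Finset.card_image_of_injective _ hinj, Finset.card_image_of_injective _ hinj]
  congr 3
  symm
  refine Finset.card_bij (fun i _ => i + 1) ?_ ?_ ?_
  · intro i hi
    simpa using hi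
  · intro i _ j _ h
    exact add_right_cancel h
  · intro j hj
    exact ⟨j - 1, by simpa using hj, by simp⟩

/-- The ring in the statement. -/
abbrev QRing (R : Type) [CommRing R] {V E : Type} [Fintype E] [DecidableEq V]
    (src tgt : E → V) (v : V) : Type :=
  MvPolynomial {x : E | src x = v ∨ tgt x = v} R ⧸
    Ideal.comap
      (MvPolynomial.rename (Subtype.val : {x : E | src x = v ∨ tgt x = v} → E)).toRingHom
      (incidenceIdeal R src tgt)

theorem exists_surj (R : Type) [CommRing R] {V E : Type} [Fintype E]
    [DecidableEq V] (src tgt : E → V) (v : V)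
    (h : ∃ C : Set E, IsCycle src tgt C ∧ v ∈ src '' C) :
    ∃ f : QRing R src tgt v →+* Polynomial R, Function.Surjective f := by
  classical
  obtain ⟨C, hC, x, hxC, hx⟩ := h
  let g : MvPolynomial {x : E | src x = v ∨ tgt x = v} R →ₐ[R] Polynomial R :=
    (cycEval R C).comp (MvPolynomial.rename Subtype.val)
  refine ⟨Ideal.Quotient.lift _ g.toRingHom fun p hp => cycEval_zero R src tgt C hC _ hp, ?_⟩
  apply Ideal.Quotient.lift_surjective_of_surjective
  change Function.Surjective g
  intro q
  refine ⟨Polynomial.aeval (X ⟨x, Or.inl hx⟩) q, ?_⟩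
  rw [← Polynomial.aeval_algHom_apply]
  simp [g, cycEval, hxC]

theorem isNilp (R : Type) [CommRing R] {V E : Type} [Fintype V] [Fintype E]
    [DecidableEq V] [DecidableEq E] (src tgt : E → V) (v : V)
    (h : ¬ ∃ C : Set E, IsCycle src tgt C ∧ v ∈ src '' C)
    (x : {x : E | src x = v ∨ tgt x = v}) :
    IsNilpotent (Ideal.Quotient.mk _ (X x) : QRing R src tgt v) := by
  obtain ⟨n, hn⟩ := nilp_of_no_cycle R src tgt v h x.1 x.2
  refine ⟨n, ?_⟩
  rw [← map_pow, Ideal.Quotient.eq_zero_iff_mem, Ideal.mem_comap]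
  simpa using hn

theorem finite_of (R : Type) [CommRing R] {V E : Type} [Fintype V] [Fintype E]
    [DecidableEq V] [DecidableEq E] (src tgt : E → V) (v : V)
    (h : ¬ ∃ C : Set E, IsCycle src tgt C ∧ v ∈ src '' C) :
    Module.Finite R (QRing R src tgt v) := by
  have : Algebra.IsIntegral R (QRing R src tgt v) := by
    constructor
    intro q
    obtain ⟨p, rfl⟩ := Ideal.Quotient.mk_surjective q
    induction p using MvPolynomial.induction_on with
    | C r => exact isIntegral_algebraMap (R := R) (A := QRing R src tgt v) (x := r)
    | add p q hp hq => rw [map_add]; exact hp.add hq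
    | mul_X p x hp =>
      rw [map_mul]
      refine hp.mul ?_
      obtain ⟨n, hn⟩ := isNilp R src tgt v h x
      refine IsIntegral.of_pow (Nat.succ_pos n) ?_
      rw [pow_succ, hn, zero_mul]
      exact isIntegral_zero
  exact Algebra.IsIntegral.finite

theorem ringKrullDim_quot_nilradical (A : Type) [CommRing A] :
    ringKrullDim (A ⧸ nilradical A) = ringKrullDim A := by
  rw [ringKrullDim_quotient, ringKrullDim, nilradical, PrimeSpectrum.zeroLocus_radical,
    Submodule.zero_eq_bot, PrimeSpectrum.zeroLocus_bot]
  exact Order.krullDim_eq_of_orderIso OrderIso.Set.univ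

theorem dim_of (R : Type) [CommRing R] {V E : Type} [Fintype V] [Fintype E]
    [DecidableEq V] [DecidableEq E] (src tgt : E → V) (v : V)
    (h : ¬ ∃ C : Set E, IsCycle src tgt C ∧ v ∈ src '' C) :
    ringKrullDim (QRing R src tgt v) = ringKrullDim R := by
  apply le_antisymm
  · rw [← ringKrullDim_quot_nilradical]
    let m : MvPolynomial {x : E | src x = v ∨ tgt x = v} R →+*
      (QRing R src tgt v ⧸ nilradical (QRing R src tgt v)) :=
      (Ideal.Quotient.mk _).comp (Ideal.Quotient.mk _)
    refine ringKrullDim_le_of_surjective (m.comp C) ?_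
    have hm : m = (m.comp C).comp constantCoeff := by
      apply MvPolynomial.ringHom_ext
      · intro r
        simp
      · intro x
        simp only [RingHom.comp_apply, constantCoeff_X, map_zero]
        exact Ideal.Quotient.eq_zero_iff_mem.mpr (isNilp R src tgt v h x)
    intro q
    obtain ⟨q, rfl⟩ := Ideal.Quotient.mk_surjective q
    obtain ⟨p, rfl⟩ := Ideal.Quotient.mk_surjective q
    exact ⟨constantCoeff p, (DFunLike.congr_fun hm p).symm⟩
  · have hle : incidenceIdeal R src tgt ≤ RingHom.ker (constantCoeff (σ := E) (R := R)) := by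
      rw [incidenceIdeal, Ideal.span_le]
      rintro _ ⟨w, l, hl, rfl⟩
      have : ∀ s : Finset E, constantCoeff (esymmOf R s l) = 0 := by
        intro s
        simp only [esymmOf, map_sum, map_prod, constantCoeff_X]
        refine Finset.sum_eq_zero fun t ht => ?_
        rw [Finset.prod_const, (Finset.mem_powersetCard.mp ht).2, zero_pow (by omega)]
      change constantCoeff _ = 0
      rw [map_sub, this, this, sub_zero]
    let g : MvPolynomial {x : E | src x = v ∨ tgt x = v} R →+* R :=
      constantCoeff.comp (MvPolynomial.rename Subtype.val).toRingHom
    refine ringKrullDim_le_of_surjective (Ideal.Quotient.lift _ g fun p hp => hle hp) ?_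
    apply Ideal.Quotient.lift_surjective_of_surjective
    intro r
    exact ⟨C r, by simp [g]⟩

theorem pow_of (R : Type) [CommRing R] {V E : Type} [Fintype V] [Fintype E]
    [DecidableEq V] [DecidableEq E] (src tgt : E → V) (v : V)
    (h : ¬ ∃ C : Set E, IsCycle src tgt C ∧ v ∈ src '' C) :
    ∃ n : ℕ, 1 ≤ n ∧ ∀ x : E, (src x = v ∨ tgt x = v) →
         (X x : MvPolynomial E R) ^ n ∈ incidenceIdeal R src tgt := by
  have : ∀ x : E, ∃ n : ℕ, (src x = v ∨ tgt x = v) →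
      (X x : MvPolynomial E R) ^ n ∈ incidenceIdeal R src tgt := by
    intro x
    by_cases hx : src x = v ∨ tgt x = v
    · obtain ⟨n, hn⟩ := nilp_of_no_cycle R src tgt v h x hx
      exact ⟨n, fun _ => hn⟩
    · exact ⟨0, fun h => absurd h hx⟩
  choose f hf using this
  refine ⟨∑ x, f x + 1, by omega, fun x hx => ?_⟩
  refine Ideal.pow_mem_of_pow_mem _ (hf x hx) ?_
  have := Finset.single_le_sum (f := f) (fun _ _ => Nat.zero_le _) (Finset.mem_univ x)
  omega

theorem stmt10 {V E : Type} [Fintype V] [Fintype E] [DecidableEq V] [DecidableEq E]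
    (src tgt : E → V) (v : V) :
    List.TFAE
      [¬ ∃ C : Set E, IsCycle src tgt C ∧ v ∈ src '' C,
       Module.Finite ℤ
         (MvPolynomial {x : E | src x = v ∨ tgt x = v} ℤ ⧸
           Ideal.comap
             (MvPolynomial.rename (Subtype.val : {x : E | src x = v ∨ tgt x = v} → E)).toRingHom
             (incidenceIdeal ℤ src tgt)),
       ∃ n : ℕ, 1 ≤ n ∧ ∀ x : E, (src x = v ∨ tgt x = v) →
         (X x : MvPolynomial E ℤ) ^ n ∈ incidenceIdeal ℤ src tgt,
       ringKrullDim
         (MvPolynomial {x : E | src x = v ∨ tgt x = v} ℤ ⧸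
           Ideal.comap
             (MvPolynomial.rename (Subtype.val : {x : E | src x = v ∨ tgt x = v} → E)).toRingHom
             (incidenceIdeal ℤ src tgt)) = 1,
       ringKrullDim
         (MvPolynomial {x : E | src x = v ∨ tgt x = v} ℚ ⧸
           Ideal.comap
             (MvPolynomial.rename (Subtype.val : {x : E | src x = v ∨ tgt x = v} → E)).toRingHom
             (incidenceIdeal ℚ src tgt)) = 0] := by
  have dimZ : ringKrullDim ℤ = 1 := IsPrincipalIdealRing.ringKrullDim_eq_one ℤ Int.not_isField
  have dimQ : ringKrullDim ℚ = 0 := ringKrullDim_eq_zero_of_field ℚ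
  tfae_have 1 → 2 := fun h => by
    convert finite_of ℤ src tgt v h
  tfae_have 1 → 3 := pow_of ℤ src tgt v
  tfae_have 1 → 4 := fun h => (dim_of ℤ src tgt v h).trans dimZ
  tfae_have 1 → 5 := fun h => (dim_of ℚ src tgt v h).trans dimQ
  tfae_have 2 → 1 := by
    intro hfin h
    obtain ⟨f, hf⟩ := exists_surj ℤ src tgt v h
    refine Polynomial.not_finite (R := ℤ) ?_
    convert Module.Finite.of_surjective f.toAddMonoidHom.toIntLinearMap hf
  tfae_have 3 → 1 := by
    classical
    rintro ⟨n, hn, hx⟩ ⟨C, hC, x, hxC, hxv⟩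
    have := cycEval_zero ℤ src tgt C hC _ (hx x (Or.inl hxv))
    simp [cycEval, hxC] at this
  tfae_have 4 → 1 := by
    intro hd h
    obtain ⟨f, hf⟩ := exists_surj ℤ src tgt v h
    have h1 := ringKrullDim_le_of_surjective f hf
    rw [Polynomial.ringKrullDim_of_isNoetherianRing, dimZ] at h1
    have h2 := h1.trans hd.le
    exact absurd h2 (by decide)
  tfae_have 5 → 1 := by
    intro hd h
    obtain ⟨f, hf⟩ := exists_surj ℚ src tgt v h
    have h1 := ringKrullDim_le_of_surjective f hf
    rw [Polynomial.ringKrullDim_of_isNoetherianRing, dimQ] at h1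
    have h2 := h1.trans hd.le
    exact absurd h2 (by decide)
  tfae_finish
end
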